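/- arXiv:2108.12487 — 3 statements merged into one kernel-verified Lean document; each statement's English description precedes it below -/
import Mathlib

section
/- Let x : ℕ → ℝ be a sequence of positive real numbers, let s_n = x_0 + ⋯ + x_n with s_{−1} = 0, let g_n ∈ SL(2,ℝ) be the matrix [[(s_{n−1}+s_n)/(s_n−s_{n−1}), −2·s_{n−1}·s_n/(s_n−s_{n−1})], [−2/(s_n−s_{n−1}), (s_{n−1}+s_n)/(s_n−s_{n−1})]], and let Γ_x be the subgroup of SL(2,ℝ) generated by {g_n : n ∈ ℕ}. Then Γ_x acts properly discontinuously on the upper half-plane ℍ: for all compact subsets K, L ⊆ ℍ, the set {γ ∈ Γ_x : (γ·K) ∩ L ≠ ∅} is finite. -/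
/-- Partial sums of `x`: `sPartial x n = x 0 + ⋯ + x (n-1)`.  Thus
`sPartial x 0 = 0` realizes the convention `s_{-1} = 0`, and for `n ∈ ℕ`,
`s_n = sPartial x (n+1)` and `s_{n-1} = sPartial x n`. -/
noncomputable def sPartial (x : ℕ → ℝ) (n : ℕ) : ℝ := ∑ i ∈ Finset.range n, x i

/-- The matrix `g_n` of the paper, where `s_{n-1} = sPartial x n` and
`s_n = sPartial x (n+1)`:
`[[(s_{n−1}+s_n)/(s_n−s_{n−1}), −2·s_{n−1}·s_n/(s_n−s_{n−1})],
  [−2/(s_n−s_{n−1}), (s_{n−1}+s_n)/(s_n−s_{n−1})]]`. -/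
noncomputable def gMat (x : ℕ → ℝ) (n : ℕ) : Matrix (Fin 2) (Fin 2) ℝ :=
  !![(sPartial x n + sPartial x (n + 1)) / (sPartial x (n + 1) - sPartial x n),
      -2 * sPartial x n * sPartial x (n + 1) / (sPartial x (n + 1) - sPartial x n);
      -2 / (sPartial x (n + 1) - sPartial x n),
      (sPartial x n + sPartial x (n + 1)) / (sPartial x (n + 1) - sPartial x n)]

/-!
Compare imaginary parts instead of tracking points. For `p ≠ q`, the matrix with `s_{n-1} = p` and
`s_n = q` raises `Im z` exactly when `z` lies inside the semicircle with endpoints `p` and `q`, and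
lowers it exactly when `z` lies outside; its inverse does the same with `-p` and `-q`. The
semicircles over `(s_{n-1}, s_n)` and over the mirror images of these intervals have disjoint
interiors. Each letter of a reduced word sends its argument into the semicircle of its own inverse,
which lies outside the semicircle of the next letter, so every further letter lowers `Im`. Hence a
nontrivial group element strictly lowers `Im` on the region outside all the semicircles, and cannot
take a point of that region to another one (apply the same to the inverse). Since the region has
interior points, the group is discrete, and discrete subgroups of `SL(2, ℝ)` act properly
discontinuously.
-/

open Set Function UpperHalfPlane
open scoped MatrixGroups

section PingPong

variable {ι G α R : Type*} [Group G] [MulAction G α] [Preorder R]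

/-- The value in `G` of a letter of a word over the family `g`: as in `FreeGroup`, `(i, true)`
stands for `g i` and `(i, false)` for its inverse. -/
def letter (g : ι → G) (a : ι × Bool) : G := cond a.2 (g a.1) (g a.1)⁻¹

/-- The Ford domain of the family `g` with respect to a height function `h`: the points whose height
is lowered by every letter. -/
def fordDomain (h : α → R) (g : ι → G) : Set α := {z | ∀ a, h (letter g a • z) < h z}

/-- The Schottky condition with respect to a height function `h`: a point raised by one letter is
lowered by all the others. For the height `Im` on the upper half-plane this says that the isometric
discs of the letters are disjoint and that none meets the boundary of another. -/
def IsSchottky (h : α → R) (g : ι → G) : Prop :=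
  ∀ ⦃a b⦄, a ≠ b → ∀ ⦃z⦄, h z < h (letter g a • z) → h (letter g b • z) < h z

lemma letter_not (g : ι → G) (i : ι) (b : Bool) : letter g (i, !b) = (letter g (i, b))⁻¹ := by
  cases b <;> simp [letter]

variable {h : α → R} {g : ι → G}

lemma IsSchottky.prod_cons_smul_lt (hg : IsSchottky h g) {z : α} (hz : z ∈ fordDomain h g)
    {a : ι × Bool} {L : List (ι × Bool)} (hL : FreeGroup.IsReduced (a :: L)) :
    h (((a :: L).map (letter g)).prod • z) < h ((L.map (letter g)).prod • z) := by
  induction L generalizing a with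
  | nil => simpa using hz a
  | cons c L ih =>
    rw [FreeGroup.isReduced_cons_cons] at hL
    have ne_inv : (c.1, !c.2) ≠ a := by
      rintro rfl
      simpa using hL.1 rfl
    rw [List.map_cons, List.prod_cons, mul_smul]
    apply hg ne_inv
    rw [letter_not, List.map_cons, List.prod_cons, mul_smul, inv_smul_smul, ← mul_smul,
      ← List.prod_cons, ← List.map_cons]
    exact ih hL.2

lemma IsSchottky.prod_smul_lt (hg : IsSchottky h g) {z : α} (hz : z ∈ fordDomain h g)
    {L : List (ι × Bool)} (hL : FreeGroup.IsReduced L) (hne : L ≠ []) :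
    h ((L.map (letter g)).prod • z) < h z := by
  induction L with
  | nil => exact absurd rfl hne
  | cons a L ih =>
    have first_lt := hg.prod_cons_smul_lt hz hL
    rcases eq_or_ne L [] with rfl | hL'
    · simpa using first_lt
    · exact first_lt.trans (ih hL.tail hL')

lemma IsSchottky.smul_lt (hg : IsSchottky h g) {z : α} (hz : z ∈ fordDomain h g) {γ : G}
    (hγ : γ ∈ Subgroup.closure (range g)) (hne : γ ≠ 1) : h (γ • z) < h z := by
  classical
  rw [← FreeGroup.range_lift_eq_closure] at hγ
  obtain ⟨w, rfl⟩ := hγ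
  have hw : FreeGroup.lift g w = (w.toWord.map (letter g)).prod := by
    conv_lhs => rw [← FreeGroup.mk_toWord (x := w), FreeGroup.lift_mk]
    rfl
  rw [hw] at hne ⊢
  refine hg.prod_smul_lt hz FreeGroup.isReduced_toWord fun hnil => hne ?_
  simp [hnil]

lemma IsSchottky.eq_one_of_smul_mem_fordDomain (hg : IsSchottky h g) {z : α}
    (hz : z ∈ fordDomain h g) {γ : G} (hγ : γ ∈ Subgroup.closure (range g))
    (hγz : γ • z ∈ fordDomain h g) : γ = 1 := by
  by_contra hne
  have down := hg.smul_lt hz hγ hne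
  have up := hg.smul_lt hγz (inv_mem hγ) (inv_ne_one.mpr hne)
  rw [inv_smul_smul] at up
  exact lt_asymm down up

lemma discreteTopology_of_smul_mem_imp_eq_one [TopologicalSpace G] [SeparatelyContinuousMul G]
    [TopologicalSpace α] [ContinuousSMul G α] {U : Set α} (hU : IsOpen U) {z : α} (hz : z ∈ U)
    (hone : ∀ γ : G, γ • z ∈ U → γ = 1) : DiscreteTopology G := by
  apply discreteTopology_of_isOpen_singleton_one
  have preimage_eq : (· • z) ⁻¹' U = ({1} : Set G) :=
    Subset.antisymm hone (by simpa using hz)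
  rw [← preimage_eq]
  exact hU.preimage (by fun_prop)

lemma IsSchottky.discreteTopology_closure [TopologicalSpace G] [IsTopologicalGroup G]
    [TopologicalSpace α] [ContinuousSMul G α] (hg : IsSchottky h g)
    (hne : (interior (fordDomain h g)).Nonempty) :
    DiscreteTopology (Subgroup.closure (range g)) := by
  obtain ⟨z, hz⟩ := hne
  exact discreteTopology_of_smul_mem_imp_eq_one isOpen_interior hz fun γ hγz =>
    Subtype.ext <| hg.eq_one_of_smul_mem_fordDomain (interior_subset hz) γ.2
      (interior_subset hγz)

end PingPong

section Semicircle

lemma im_specialLinearGroup_smul (g : SL(2, ℝ)) (z : ℍ) :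
    (g • z).im = z.im / Complex.normSq (denom g z) := by
  have smul_eq : g • z = (g : GL (Fin 2) ℝ) • z := rfl
  simpa [smul_eq] using UpperHalfPlane.im_smul_eq_div_normSq (g : GL (Fin 2) ℝ) z

variable {p q : ℝ}

/-- The element of `SL(2, ℝ)` that maps the exterior of the semicircle with endpoints `p`, `q` onto
the interior of the semicircle with endpoints `-p`, `-q`. It is the matrix `g_n` of the theorem when
`p = s_{n-1}` and `q = s_n`. -/
noncomputable def semicirclePairing (p q : ℝ) (hpq : p ≠ q) : SL(2, ℝ) :=
  ⟨!![(p + q) / (q - p), -2 * p * q / (q - p); -2 / (q - p), (p + q) / (q - p)], by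
    have : q - p ≠ 0 := sub_ne_zero.mpr hpq.symm
    rw [Matrix.det_fin_two_of]
    field_simp
    ring⟩

/-- The power of the point `z` with respect to the circle with diameter `[p, q]`: negative inside
the circle and positive outside. -/
def semicirclePower (p q : ℝ) (z : ℍ) : ℝ := (z.re - p) * (z.re - q) + z.im ^ 2

lemma semicirclePairing_inv (hpq : p ≠ q) :
    (semicirclePairing p q hpq)⁻¹ = semicirclePairing (-p) (-q) (neg_injective.ne hpq) := by
  apply Subtype.ext
  rw [Matrix.SpecialLinearGroup.coe_inv]
  simp only [semicirclePairing, Matrix.adjugate_fin_two_of]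
  have sub_eq : -q - -p = -(q - p) := by ring
  simp only [sub_eq, div_neg]
  congr! 3 <;> ring_nf

lemma normSq_denom_semicirclePairing (hpq : p ≠ q) (z : ℍ) :
    Complex.normSq (denom (semicirclePairing p q hpq) z) =
      1 + 4 / (q - p) ^ 2 * semicirclePower p q z := by
  have : q - p ≠ 0 := sub_ne_zero.mpr hpq.symm
  have denom_eq : denom (semicirclePairing p q hpq) z =
      ⟨-2 / (q - p) * z.re + (p + q) / (q - p), -2 / (q - p) * z.im⟩ := by
    change ((-2 / (q - p) : ℝ) : ℂ) * z + ((p + q) / (q - p) : ℝ) = _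
    apply Complex.ext <;> simp only [Complex.add_re, Complex.add_im, Complex.re_ofReal_mul,
      Complex.im_ofReal_mul, Complex.ofReal_re, Complex.ofReal_im, add_zero, coe_re, coe_im]
  rw [denom_eq, Complex.normSq_mk, semicirclePower]
  field_simp
  ring

lemma im_lt_im_semicirclePairing_smul_iff (hpq : p ≠ q) (z : ℍ) :
    z.im < (semicirclePairing p q hpq • z).im ↔ semicirclePower p q z < 0 := by
  have : 0 < 4 / (q - p) ^ 2 := div_pos four_pos (sq_pos_of_ne_zero (sub_ne_zero.mpr hpq.symm))
  rw [im_specialLinearGroup_smul, lt_div_iff₀ (normSq_denom_pos _ z.im_ne_zero),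
    mul_lt_iff_lt_one_right z.im_pos, normSq_denom_semicirclePairing, add_lt_iff_neg_left,
    ← smul_eq_mul, smul_neg_iff_of_pos_left this]

lemma im_semicirclePairing_smul_lt_iff (hpq : p ≠ q) (z : ℍ) :
    (semicirclePairing p q hpq • z).im < z.im ↔ 0 < semicirclePower p q z := by
  have : 0 < 4 / (q - p) ^ 2 := div_pos four_pos (sq_pos_of_ne_zero (sub_ne_zero.mpr hpq.symm))
  rw [im_specialLinearGroup_smul, div_lt_iff₀ (normSq_denom_pos _ z.im_ne_zero),
    lt_mul_iff_one_lt_right z.im_pos, normSq_denom_semicirclePairing, lt_add_iff_pos_right,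
    mul_pos_iff_of_pos_left this]

lemma semicirclePower_pos_of_re_notMem_uIoo {z : ℍ} (hz : z.re ∉ uIoo p q) :
    0 < semicirclePower p q z := by
  have : 0 ≤ (z.re - p) * (z.re - q) := by
    contrapose! hz
    rcases mul_neg_iff.mp hz with ⟨h₁, h₂⟩ | ⟨h₁, h₂⟩
    · exact mem_uIoo_of_lt (sub_pos.mp h₁) (sub_neg.mp h₂)
    · exact mem_uIoo_of_gt (sub_pos.mp h₂) (sub_neg.mp h₁)
  have := z.im_pos
  unfold semicirclePower
  positivity

lemma semicirclePower_pos_of_abs_sub_lt {z : ℍ} (hz : |q - p| < 2 * z.im) :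
    0 < semicirclePower p q z := by
  have := sq_lt_sq' (abs_lt.mp hz).1 (abs_lt.mp hz).2
  unfold semicirclePower
  nlinarith [sq_nonneg (2 * z.re - p - q)]

end Semicircle

section SchottkyFamily

variable {ι : Type*} {p q : ι → ℝ}

/-- The endpoint `p i` or `-p i`, according to the sign of the letter: if the generators are
`semicirclePairing (p i) (q i)`, the letter `a` pairs the semicircle over `signedEndpoint p a` and
`signedEndpoint q a` with its mirror image. -/
def signedEndpoint (p : ι → ℝ) (a : ι × Bool) : ℝ := cond a.2 (p a.1) (-p a.1)

lemma signedEndpoint_ne (hpq : ∀ i, p i ≠ q i) :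
    ∀ a, signedEndpoint p a ≠ signedEndpoint q a
  | (i, true) => hpq i
  | (i, false) => neg_injective.ne (hpq i)

lemma letter_semicirclePairing (hpq : ∀ i, p i ≠ q i) :
    ∀ a, letter (fun i => semicirclePairing (p i) (q i) (hpq i)) a =
      semicirclePairing (signedEndpoint p a) (signedEndpoint q a) (signedEndpoint_ne hpq a)
  | (_, true) => rfl
  | (i, false) => semicirclePairing_inv (hpq i)

lemma isSchottky_semicirclePairing (hpq : ∀ i, p i ≠ q i)
    (hdisj : Pairwise (Disjoint on fun a => uIoo (signedEndpoint p a) (signedEndpoint q a))) :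
    IsSchottky UpperHalfPlane.im fun i => semicirclePairing (p i) (q i) (hpq i) := by
  intro a b hab z hz
  rw [letter_semicirclePairing, im_lt_im_semicirclePairing_smul_iff] at hz
  rw [letter_semicirclePairing, im_semicirclePairing_smul_lt_iff]
  have mem_a : z.re ∈ uIoo (signedEndpoint p a) (signedEndpoint q a) := by
    contrapose! hz
    exact (semicirclePower_pos_of_re_notMem_uIoo hz).le
  exact semicirclePower_pos_of_re_notMem_uIoo (disjoint_left.mp (hdisj hab) mem_a)

lemma mem_fordDomain_semicirclePairing_iff (hpq : ∀ i, p i ≠ q i) {z : ℍ} :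
    z ∈ fordDomain UpperHalfPlane.im (fun i => semicirclePairing (p i) (q i) (hpq i)) ↔
      ∀ a, 0 < semicirclePower (signedEndpoint p a) (signedEndpoint q a) z := by
  refine forall_congr' fun a => ?_
  rw [letter_semicirclePairing, im_semicirclePairing_smul_lt_iff]

lemma mem_uIoo_signedEndpoint_iff {t : ℝ} {a : ι × Bool} :
    t ∈ uIoo (signedEndpoint p a) (signedEndpoint q a) ↔
      cond a.2 t (-t) ∈ uIoo (p a.1) (q a.1) := by
  rcases a with ⟨i, _ | _⟩
  · simp only [signedEndpoint, cond_false, uIoo, mem_Ioo, min_neg_neg, max_neg_neg, neg_lt, lt_neg]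
    exact and_comm
  · rfl

lemma pairwise_disjoint_uIoo_signedEndpoint
    (hdisj : Pairwise (Disjoint on fun i => uIoo (p i) (q i)))
    (hpos : ∀ i, uIoo (p i) (q i) ⊆ Ioi 0) :
    Pairwise (Disjoint on fun a => uIoo (signedEndpoint p a) (signedEndpoint q a)) := by
  intro a b hab
  refine disjoint_left.mpr fun t ha hb => ?_
  rw [mem_uIoo_signedEndpoint_iff] at ha hb
  have ha_pos : 0 < cond a.2 t (-t) := hpos _ ha
  have hb_pos : 0 < cond b.2 t (-t) := hpos _ hb
  have same_sign : a.2 = b.2 := by grind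
  rw [← same_sign] at hb
  exact disjoint_left.mp (hdisj fun hi => hab (Prod.ext hi same_sign)) ha hb

end SchottkyFamily

section StrictMono

variable {s : ℕ → ℝ}

lemma isSchottky_semicirclePairing_of_strictMono (hs : StrictMono s) (h0 : 0 ≤ s 0) :
    IsSchottky UpperHalfPlane.im fun n =>
      semicirclePairing (s n) (s (n + 1)) (hs n.lt_succ_self).ne := by
  apply isSchottky_semicirclePairing
  have uIoo_eq (n : ℕ) : uIoo (s n) (s (n + 1)) = Ioo (s n) (s (n + 1)) :=
    uIoo_of_lt (hs n.lt_succ_self)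
  refine pairwise_disjoint_uIoo_signedEndpoint ?_ fun n t ht => ?_
  · simpa only [uIoo_eq, Order.succ_eq_add_one] using hs.monotone.pairwise_disjoint_on_Ioo_succ
  · rw [uIoo_eq] at ht
    exact (h0.trans (hs.monotone n.zero_le)).trans_lt ht.1

/-- Only the first semicircle and its mirror image stand over `|Re z| < s 1`, and their radius is
less than `s 1`. -/
lemma mem_fordDomain_of_abs_re_lt (hs : StrictMono s) (h0 : 0 ≤ s 0) {z : ℍ}
    (hre : |z.re| < s 1) (him : s 1 < z.im) :
    z ∈ fordDomain UpperHalfPlane.im fun n =>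
      semicirclePairing (s n) (s (n + 1)) (hs n.lt_succ_self).ne := by
  rw [mem_fordDomain_semicirclePairing_iff (q := fun n => s (n + 1))]
  rintro ⟨_ | n, b⟩
  · apply semicirclePower_pos_of_abs_sub_lt
    have := hs zero_lt_one
    cases b <;> simp only [signedEndpoint, cond_true, cond_false, abs_lt] <;> constructor <;>
      linarith
  · apply semicirclePower_pos_of_re_notMem_uIoo
    rw [mem_uIoo_signedEndpoint_iff, uIoo_of_lt (hs (n + 1).lt_succ_self)]
    have le_s : s 1 ≤ s (n + 1) := hs.monotone (by lia)
    have := abs_lt.mp hre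
    cases b <;> simp only [cond_true, cond_false, mem_Ioo, not_and_or] <;> left <;> linarith

lemma interior_fordDomain_semicirclePairing_nonempty (hs : StrictMono s) (h0 : 0 ≤ s 0) :
    (interior (fordDomain UpperHalfPlane.im fun n =>
      semicirclePairing (s n) (s (n + 1)) (hs n.lt_succ_self).ne)).Nonempty := by
  have s_pos : 0 < s 1 := h0.trans_lt (hs zero_lt_one)
  have isOpen_box : IsOpen {z : ℍ | |z.re| < s 1 ∧ s 1 < z.im} :=
    (isOpen_lt continuous_re.abs continuous_const).inter
      (isOpen_lt continuous_const continuous_im)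
  have box_subset := fun (z : ℍ) (hz : |z.re| < s 1 ∧ s 1 < z.im) =>
    mem_fordDomain_of_abs_re_lt hs h0 hz.1 hz.2
  refine ⟨⟨⟨0, 2 * s 1⟩, by simpa using s_pos⟩, interior_maximal box_subset isOpen_box ?_⟩
  constructor <;> simp [UpperHalfPlane.re, UpperHalfPlane.im, s_pos]

theorem properlyDiscontinuousSMul_closure_semicirclePairing (hs : StrictMono s) (h0 : 0 ≤ s 0) :
    ProperlyDiscontinuousSMul (Subgroup.closure (range fun n =>
      semicirclePairing (s n) (s (n + 1)) (hs n.lt_succ_self).ne)) ℍ := by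
  have := (isSchottky_semicirclePairing_of_strictMono hs h0).discreteTopology_closure
    (interior_fordDomain_semicirclePairing_nonempty hs h0)
  infer_instance

end StrictMono

lemma strictMono_sPartial {x : ℕ → ℝ} (hx : ∀ n, 0 < x n) : StrictMono (sPartial x) :=
  strictMono_nat_of_lt_succ fun n => by
    simpa [sPartial, Finset.sum_range_succ] using hx n

/-- `Γ_x` acts properly discontinuously on the upper half-plane:
for all compact `K, L ⊆ ℍ`, the set of `γ ∈ Γ_x` with `(γ·K) ∩ L ≠ ∅` is finite. -/
theorem stmt9 (x : ℕ → ℝ) (hx : ∀ n, 0 < x n)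
    (Γ : Subgroup (Matrix.SpecialLinearGroup (Fin 2) ℝ))
    (hΓ : Γ = Subgroup.closure
      {g : Matrix.SpecialLinearGroup (Fin 2) ℝ |
        ∃ n : ℕ, (g : Matrix (Fin 2) (Fin 2) ℝ) = gMat x n}) :
    ∀ K L : Set UpperHalfPlane, IsCompact K → IsCompact L →
      {γ : Matrix.SpecialLinearGroup (Fin 2) ℝ |
        γ ∈ Γ ∧ ((fun z => γ • z) '' K ∩ L).Nonempty}.Finite := by
  have hs := strictMono_sPartial hx
  have generators_eq : {g : SL(2, ℝ) | ∃ n, (g : Matrix (Fin 2) (Fin 2) ℝ) = gMat x n} =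
      range fun n => semicirclePairing (sPartial x n) (sPartial x (n + 1)) (hs n.lt_succ_self).ne :=
    ext fun _ => exists_congr fun _ => ⟨fun h => Subtype.ext h.symm, fun h => h ▸ rfl⟩
  have properly := properlyDiscontinuousSMul_closure_semicirclePairing hs Finset.sum_empty.ge
  rw [← generators_eq, ← hΓ] at properly
  exact fun K L hK hL => Γ.properlyDiscontinuousSMul_iff.mp properly hK hL
end

section
/- Let x : ℕ → ℝ be a sequence of positive real numbers, let s_n = x_0 + ⋯ + x_n with s_{−1} = 0, let g_n ∈ SL(2,ℝ) be the matrix [[(s_{n−1}+s_n)/(s_n−s_{n−1}), −2·s_{n−1}·s_n/(s_n−s_{n−1})], [−2/(s_n−s_{n−1}), (s_{n−1}+s_n)/(s_n−s_{n−1})]], and let Γ_x be the subgroup of SL(2,ℝ) generated by {g_n : n ∈ ℕ}. Define D = {z ∈ ℍ : for all n ∈ ℕ, |z − (s_{n−1}+s_n)/2| > (s_n−s_{n−1})/2 and |z + (s_{n−1}+s_n)/2| > (s_n−s_{n−1})/2}. Then D is a fundamental domain for the action of Γ_x on ℍ with respect to the hyperbolic area measure: the translates γ·D for γ ∈ Γ_x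 (taken modulo ±I) are pairwise disjoint, and the complement of their union ⋃_{γ∈Γ_x} γ·D in ℍ has hyperbolic area zero. -/
/-- The Möbius transformation of `ℂ` associated to a real 2×2 matrix
`[[α,β],[γ,δ]]`: `z ↦ (αz+β)/(γz+δ)`. -/
noncomputable def moebius (M : Matrix (Fin 2) (Fin 2) ℝ) (z : ℂ) : ℂ :=
  ((M 0 0 : ℂ) * z + (M 0 1 : ℂ)) / ((M 1 0 : ℂ) * z + (M 1 1 : ℂ))

/-!
The generator `g_n` is the inversion in `γ_n^+` followed by the reflection `z ↦ -conj z`, so it maps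
the exterior of `γ_n^+` onto the interior of `γ_n^-`. As the closed half-discs are pairwise disjoint
in `ℍ`, ping-pong shows that every nontrivial element of `Γ_x` moves `D` off itself.

Conversely, `D` is a neighborhood of the point `p = i x_0`, so the orbit of `p` is uniformly
discrete and each orbit `Γ_x z` has a point `w` closest to `p`. The reflection fixes `p`, hence
`dist (g_n w) p` is the distance from `p` to the inverse point of `w` in `γ_n^+`; minimality forces
`w` not to be inside `γ_n^+`, and likewise for `γ_n^-` and `g_n⁻¹`. So `w` lies in `D` or on one of
the half-circles, and the countably many translates of these have area zero.
-/

open UpperHalfPlane Filter Topology MeasureTheory Set Function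
open scoped Pointwise MatrixGroups

section GroupActions

variable {G X ι : Type*} [Group G] [MulAction G X]

theorem prod_smul_mem_of_isReduced {T : ι × Bool → Set X} {a : ι × Bool → G}
    (hT : Pairwise (Disjoint on T)) (ha : ∀ i b, MapsTo (a (i, b) • ·) (T (i, !b))ᶜ (T (i, b)))
    {z : X} (hz : ∀ j, z ∉ T j) :
    ∀ {j : ι × Bool} {L : List (ι × Bool)}, FreeGroup.IsReduced (j :: L) →
      ((j :: L).map a).prod • z ∈ T j
  | j, [], _ => by simpa using ha j.1 j.2 (hz _)
  | j, k :: L, hred => by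
    rw [FreeGroup.isReduced_cons_cons] at hred
    have hk : ((k :: L).map a).prod • z ∈ T k := prod_smul_mem_of_isReduced hT ha hz hred.2
    have hkj : k ≠ (j.1, !j.2) := by
      rintro rfl
      simpa using hred.1
    rw [List.map_cons, List.prod_cons, mul_smul]
    exact ha j.1 j.2 (disjoint_left.1 (hT hkj) hk)

theorem smul_mem_iUnion_of_pingPong {g : ι → G} {A B : ι → Set X}
    (hA : Pairwise (Disjoint on A)) (hB : Pairwise (Disjoint on B))
    (hAB : ∀ i j, Disjoint (A i) (B j)) (hg : ∀ i, MapsTo (g i • ·) (B i)ᶜ (A i))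
    {γ : G} (hγ : γ ∈ Subgroup.closure (range g)) (hγ_ne : γ ≠ 1)
    {z : X} (hz : z ∉ ⋃ i, A i ∪ B i) : γ • z ∈ ⋃ i, A i ∪ B i := by
  classical
  let T : ι × Bool → Set X := fun j => cond j.2 (A j.1) (B j.1)
  have hT : Pairwise (Disjoint on T) := by
    rintro ⟨i, _ | _⟩ ⟨j, _ | _⟩ hij
    · exact hB (by simpa using hij)
    · exact (hAB j i).symm
    · exact hAB i j
    · exact hA (by simpa using hij)
  have hg_inv (i : ι) : MapsTo ((g i)⁻¹ • ·) (A i)ᶜ (B i) := fun w hw => by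
    by_contra hw'
    exact hw (by simpa using hg i hw')
  have hTz : ∀ j, z ∉ T j := by
    simp only [mem_iUnion, mem_union, not_exists, not_or] at hz
    rintro ⟨i, _ | _⟩
    exacts [(hz i).2, (hz i).1]
  rw [← FreeGroup.range_lift_eq_closure] at hγ
  obtain ⟨w, rfl⟩ := hγ
  rcases hw : w.toWord with _ | ⟨j, L⟩
  · rw [FreeGroup.toWord_eq_nil_iff] at hw
    exact absurd (by rw [hw, map_one]) hγ_ne
  have hmem := prod_smul_mem_of_isReduced (a := fun j => cond j.2 (g j.1) (g j.1)⁻¹) hT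
    (by rintro i (_ | _); exacts [hg_inv i, hg i]) hTz (hw ▸ FreeGroup.isReduced_toWord)
  rw [← hw, ← FreeGroup.lift_mk, FreeGroup.mk_toWord] at hmem
  refine mem_iUnion.2 ⟨j.1, ?_⟩
  rcases j with ⟨i, _ | _⟩
  exacts [Or.inr hmem, Or.inl hmem]

theorem pairwise_disjoint_smul_of_pingPong {g : ι → G} {A B : ι → Set X}
    (hA : Pairwise (Disjoint on A)) (hB : Pairwise (Disjoint on B))
    (hAB : ∀ i j, Disjoint (A i) (B j)) (hg : ∀ i, MapsTo (g i • ·) (B i)ᶜ (A i)) :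
    Pairwise (Disjoint on fun γ : Subgroup.closure (range g) => γ • (⋃ i, A i ∪ B i)ᶜ) := by
  intro γ₁ γ₂ hne
  rw [onFun, disjoint_left]
  rintro _ ⟨z, hz, rfl⟩ hz₂
  rw [mem_smul_set_iff_inv_smul_mem, smul_smul] at hz₂
  exact hz₂ (smul_mem_iUnion_of_pingPong hA hB hAB hg (γ₂⁻¹ * γ₁).2
    (by simpa [inv_mul_eq_one] using hne.symm) hz)

theorem countable_closure_range [Countable ι] (g : ι → G) :
    Countable (Subgroup.closure (range g)) := by
  rw [← FreeGroup.range_lift_eq_closure]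
  exact (countable_range (FreeGroup.lift g)).to_subtype

theorem exists_forall_dist_smul_le_of_pairwise_disjoint_smul {G X : Type*} [Group G]
    [MetricSpace X] [ProperSpace X] [MulAction G X] [IsIsometricSMul G X] {s : Set X} {p : X}
    (hs : s ∈ 𝓝 p) (hdisj : Pairwise (Disjoint on fun g : G => g • s)) (z : X) :
    ∃ g : G, ∀ h : G, dist (g • z) p ≤ dist (h • z) p := by
  obtain ⟨ε, hε, hball⟩ := Metric.mem_nhds_iff.1 hs
  have hsep : Pairwise fun g h : G => ε ≤ dist (g • p) (h • p) := by
    intro g h hgh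
    by_contra! hlt
    refine disjoint_left.1 (hdisj hgh) (smul_mem_smul_set (mem_of_mem_nhds hs)) ?_
    rw [mem_smul_set_iff_inv_smul_mem]
    apply hball
    rwa [Metric.mem_ball, ← dist_smul h, smul_inv_smul]
  have horbit : Tendsto (fun g : G => g • p) cofinite (cocompact X) := by
    let _ : TopologicalSpace G := ⊥
    have : DiscreteTopology G := ⟨rfl⟩
    rw [← cocompact_eq_cofinite]
    exact (Metric.isClosedEmbedding_of_pairwise_le_dist hε hsep).tendsto_cocompact
  have hlower (g : G) : dist (g • p) p + -dist p z ≤ dist (g • z) p := by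
    rw [← sub_eq_add_neg, sub_le_iff_le_add', ← dist_smul g p z]
    exact dist_triangle _ _ _
  have hdist : Tendsto (fun g : G => dist (g • z) p) cofinite atTop :=
    tendsto_atTop_mono hlower (tendsto_atTop_add_const_right _ _
      ((tendsto_dist_right_cocompact_atTop p).comp horbit))
  exact hdist.exists_forall_le

end GroupActions

section HalfDiscs

/-- The closed half-disc cut off from `ℍ` by the half-circle with real center `c` and
radius `r`; its complement is the exterior of that half-circle. -/
def closedHalfDisc (c r : ℝ) : Set ℍ := {z | dist (z : ℂ) c ≤ r}

variable {c c' r r' : ℝ} {z : ℍ}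

theorem im_le_of_mem_closedHalfDisc (hz : z ∈ closedHalfDisc c r) : z.im ≤ r := by
  have h := (Complex.abs_im_le_norm (z - c)).trans ((dist_eq_norm _ _).symm.trans_le hz)
  simpa [abs_of_pos z.im_pos] using h

theorem abs_re_sub_lt_of_mem_closedHalfDisc (hz : z ∈ closedHalfDisc c r) : |z.re - c| < r := by
  have h : |((z : ℂ) - c).re| < ‖(z : ℂ) - c‖ :=
    Complex.abs_re_lt_norm.2 (by simpa using z.im_ne_zero)
  simpa using h.trans_le ((dist_eq_norm _ _).symm.trans_le hz)

theorem disjoint_closedHalfDisc (h : r + r' ≤ |c - c'|) :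
    Disjoint (closedHalfDisc c r) (closedHalfDisc c' r') := by
  refine disjoint_left.2 fun z hz hz' => ?_
  have hlt := abs_re_sub_lt_of_mem_closedHalfDisc hz
  have hlt' := abs_re_sub_lt_of_mem_closedHalfDisc hz'
  have htri := abs_sub_le c z.re c'
  rw [abs_sub_comm c z.re] at htri
  linarith

theorem volume_preimage_sphere (c : ℂ) (r : ℝ) :
    volume (UpperHalfPlane.coe ⁻¹' Metric.sphere c r) = 0 := by
  rw [volume_eq_lintegral]
  exact setLIntegral_measure_zero _ _
    (measure_mono_null (image_preimage_subset _ _) (Measure.addHaar_sphere _ _ _))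

end HalfDiscs

section SidePairing

/-- The element of `SL(2, ℝ)` pairing the half-circle of center `c` and radius `r` with its mirror
image in the imaginary axis: the inversion in the former followed by `z ↦ -conj z`. -/
noncomputable def sidePairing (c r : ℝ) (hr : 0 < r) : SL(2, ℝ) :=
  ⟨!![c / r, (r ^ 2 - c ^ 2) / r; -1 / r, c / r], by
    rw [Matrix.det_fin_two_of]
    field_simp
    ring⟩

variable {c r : ℝ} {p z : ℍ}

theorem coe_sidePairing_smul (hr : 0 < r) (z : ℍ) :
    ((sidePairing c r hr • z : ℍ) : ℂ) = -c - r ^ 2 / (z - c) := by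
  have hz := sub_ne_zero.2 (z.ne_ofReal c)
  have hr' : (r : ℂ) ≠ 0 := mod_cast hr.ne'
  have hden : (-1 / r * z + c / r : ℂ) = -(z - c) / r := by ring
  rw [coe_specialLinearGroup_apply]
  simp only [sidePairing, Matrix.of_apply, Matrix.cons_val', Matrix.cons_val_zero,
    Matrix.cons_val_one, Matrix.cons_val_fin_one, Algebra.algebraMap_self, RingHom.id_apply]
  push_cast
  rw [hden]
  field_simp
  ring

theorem inv_sidePairing_smul (hr : 0 < r) (z : ℍ) :
    (sidePairing c r hr)⁻¹ • z = sidePairing (-c) r hr • z := by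
  have hz := sub_ne_zero.2 (z.ne_ofReal (-c))
  have hr' : (r : ℂ) ≠ 0 := mod_cast hr.ne'
  rw [inv_smul_eq_iff, UpperHalfPlane.ext_iff, coe_sidePairing_smul, coe_sidePairing_smul]
  push_cast at hz ⊢
  field_simp
  ring

theorem dist_sidePairing_smul_mul_dist (hr : 0 < r) (z : ℍ) :
    dist ((sidePairing c r hr • z : ℍ) : ℂ) (-c : ℝ) * dist (z : ℂ) c = r ^ 2 := by
  have hz := sub_ne_zero.2 (z.ne_ofReal c)
  rw [dist_eq_norm, dist_eq_norm, ← norm_mul, coe_sidePairing_smul]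
  push_cast
  rw [show (-c - r ^ 2 / ((z : ℂ) - c) - -c) * (z - c) = (-(r ^ 2) : ℂ) by field_simp; ring]
  simp

theorem mapsTo_sidePairing_smul (hr : 0 < r) :
    MapsTo (sidePairing c r hr • ·) (closedHalfDisc c r)ᶜ (closedHalfDisc (-c) r) := by
  intro z hz
  have hlt : r < dist (z : ℂ) c := not_le.1 hz
  have hmul := dist_sidePairing_smul_mul_dist (c := c) hr z
  change dist ((sidePairing c r hr • z : ℍ) : ℂ) (-c : ℝ) ≤ r
  by_contra! hgt
  nlinarith

theorem sq_dist_coe_ofReal (z : ℍ) (c : ℝ) : dist (z : ℂ) c ^ 2 = (z.re - c) ^ 2 + z.im ^ 2 := by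
  rw [dist_eq_norm, Complex.sq_norm, Complex.normSq_apply]
  simp [sq]

theorem re_sidePairing_smul (hr : 0 < r) (z : ℍ) :
    (sidePairing c r hr • z).re = -c - r ^ 2 * (z.re - c) / dist (z : ℂ) c ^ 2 := by
  have h := congrArg Complex.re (coe_sidePairing_smul (c := c) hr z)
  rw [← Complex.ofReal_pow, Complex.sub_re, Complex.div_re, ← Complex.sq_norm, ← dist_eq_norm,
    Complex.ofReal_re, Complex.ofReal_im] at h
  simpa using h

theorem im_sidePairing_smul (hr : 0 < r) (z : ℍ) :
    (sidePairing c r hr • z).im = r ^ 2 * z.im / dist (z : ℂ) c ^ 2 := by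
  have h := congrArg Complex.im (coe_sidePairing_smul (c := c) hr z)
  rw [← Complex.ofReal_pow, Complex.sub_im, Complex.div_im, ← Complex.sq_norm, ← dist_eq_norm,
    Complex.ofReal_re, Complex.ofReal_im] at h
  simpa using h

theorem cosh_dist_sidePairing_smul_sub (hr : 0 < r) (hp : p.re = 0) (z : ℍ) :
    Real.cosh (dist (sidePairing c r hr • z) p) - Real.cosh (dist z p) =
      (dist (p : ℂ) c ^ 2 - r ^ 2) * (dist (z : ℂ) c ^ 2 - r ^ 2) /
        (2 * r ^ 2 * z.im * p.im) := by
  have hd : dist (z : ℂ) c ≠ 0 := dist_ne_zero.2 (z.ne_ofReal c)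
  have hz := z.im_ne_zero
  have hp' := p.im_ne_zero
  have hdsq := sq_dist_coe_ofReal z c
  rw [cosh_dist', cosh_dist', re_sidePairing_smul, im_sidePairing_smul, sq_dist_coe_ofReal p, hp]
  generalize dist (z : ℂ) c = d at *
  field_simp
  linear_combination (r ^ 2 * d ^ 2 - r ^ 4) * hdsq

theorem radius_le_dist_of_dist_le_dist_sidePairing_smul (hr : 0 < r) (hp : p.re = 0)
    (hpc : p ∉ closedHalfDisc c r) (hz : dist z p ≤ dist (sidePairing c r hr • z) p) :
    r ≤ dist (z : ℂ) c := by
  have hpc' : r < dist (p : ℂ) c := not_le.1 hpc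
  have hcosh : Real.cosh (dist z p) ≤ Real.cosh (dist (sidePairing c r hr • z) p) :=
    Real.cosh_le_cosh.2 (by simpa only [abs_of_nonneg dist_nonneg] using hz)
  by_contra! hlt
  have hneg : (dist (p : ℂ) c ^ 2 - r ^ 2) * (dist (z : ℂ) c ^ 2 - r ^ 2) /
        (2 * r ^ 2 * z.im * p.im) < 0 := by
    have := z.im_pos
    have := p.im_pos
    refine div_neg_of_neg_of_pos (mul_neg_of_pos_of_neg ?_ ?_) (by positivity)
    · exact sub_pos.2 (pow_lt_pow_left₀ hpc' hr.le two_ne_zero)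
    · exact sub_neg.2 (pow_lt_pow_left₀ hlt dist_nonneg two_ne_zero)
  linarith [cosh_dist_sidePairing_smul_sub (c := c) hr hp z]

end SidePairing

/-- Half-circles to the right of the imaginary axis bounding half-discs with disjoint interiors,
from which a group is generated by pairing each half-circle with its mirror image in that axis.
The half-circles may share endpoints, and may end at `0`. -/
structure SchottkyFamily (ι : Type*) where
  center : ι → ℝ
  radius : ι → ℝ
  radius_pos (i : ι) : 0 < radius i
  radius_le_center (i : ι) : radius i ≤ center i
  radius_add_radius_le : Pairwise fun i j => radius i + radius j ≤ |center i - center j|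

namespace SchottkyFamily

variable {ι : Type*} (F : SchottkyFamily ι)

theorem center_pos (i : ι) : 0 < F.center i := (F.radius_pos i).trans_le (F.radius_le_center i)

/-- The transformation pairing the `i`-th half-circle with its mirror image. -/
noncomputable def gen (i : ι) : SL(2, ℝ) := sidePairing (F.center i) (F.radius i) (F.radius_pos i)

/-- The group generated by the side pairings of the family. -/
def group : Subgroup SL(2, ℝ) := Subgroup.closure (range F.gen)

/-- The common exterior of the half-circles of the family and of their mirror images. -/
def domain : Set ℍ :=
  (⋃ i, closedHalfDisc (-F.center i) (F.radius i) ∪ closedHalfDisc (F.center i) (F.radius i))ᶜ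

theorem mem_domain_iff {z : ℍ} : z ∈ F.domain ↔ ∀ i,
    F.radius i < dist (z : ℂ) (F.center i : ℝ) ∧ F.radius i < dist (z : ℂ) (-F.center i : ℝ) := by
  simp only [domain, closedHalfDisc, mem_compl_iff, mem_iUnion, mem_union, mem_ofPred_eq,
    not_exists, not_or, not_le, and_comm]

theorem pairwise_disjoint_smul_domain :
    Pairwise (Disjoint on fun γ : F.group => γ • F.domain) := by
  refine pairwise_disjoint_smul_of_pingPong (fun i j hij => disjoint_closedHalfDisc ?_)
    (fun i j hij => disjoint_closedHalfDisc (F.radius_add_radius_le hij))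
    (fun i j => disjoint_closedHalfDisc ?_) (fun i => mapsTo_sidePairing_smul (F.radius_pos i))
  · simpa only [neg_sub_neg, abs_sub_comm] using F.radius_add_radius_le hij
  · rw [← abs_neg]
    linarith [le_abs_self (-(-F.center i - F.center j)), F.radius_le_center i,
      F.radius_le_center j]

theorem radius_le_dist_of_forall_dist_le {p z : ℍ} (hp : p.re = 0) (hpF : p ∈ F.domain)
    (hz : ∀ γ ∈ F.group, dist z p ≤ dist (γ • z) p) (i : ι) :
    F.radius i ≤ dist (z : ℂ) (F.center i : ℝ) ∧ F.radius i ≤ dist (z : ℂ) (-F.center i : ℝ) := by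
  have hpi := F.mem_domain_iff.1 hpF i
  have hgen : F.gen i ∈ F.group := Subgroup.subset_closure (mem_range_self i)
  refine ⟨radius_le_dist_of_dist_le_dist_sidePairing_smul (F.radius_pos i) hp hpi.1.not_ge
    (hz _ hgen), radius_le_dist_of_dist_le_dist_sidePairing_smul (F.radius_pos i) hp
    hpi.2.not_ge ?_⟩
  rw [← inv_sidePairing_smul]
  exact hz _ (inv_mem hgen)

theorem ae_exists_smul_mem_domain [Countable ι] {p : ℍ} (hp : p.re = 0) (hpF : F.domain ∈ 𝓝 p) :
    ∀ᵐ z : ℍ, ∃ γ ∈ F.group, γ • z ∈ F.domain := by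
  have : IsIsometricSMul F.group ℍ := ⟨fun γ => isometry_smul ℍ (γ : SL(2, ℝ))⟩
  have : Countable F.group := countable_closure_range F.gen
  have hsphere (γ : F.group) (c r : ℝ) :
      ∀ᵐ z : ℍ, ((γ • z : ℍ) : ℂ) ∉ Metric.sphere (c : ℂ) r :=
    measure_eq_zero_iff_ae_notMem.1
      ((measure_preimage_smul volume (γ : GL (Fin 2) ℝ) _).trans (volume_preimage_sphere c r))
  have hoff : ∀ᵐ z : ℍ, ∀ (γ : F.group) (i : ι),
      dist ((γ • z : ℍ) : ℂ) (F.center i : ℝ) ≠ F.radius i ∧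
      dist ((γ • z : ℍ) : ℂ) (-F.center i : ℝ) ≠ F.radius i :=
    ae_all_iff.2 fun γ => ae_all_iff.2 fun i => (hsphere γ _ _).and (hsphere γ _ _)
  filter_upwards [hoff] with z hz
  obtain ⟨γ, hγ⟩ := exists_forall_dist_smul_le_of_pairwise_disjoint_smul hpF
    F.pairwise_disjoint_smul_domain z
  have hclosed := F.radius_le_dist_of_forall_dist_le hp (mem_of_mem_nhds hpF) (z := γ • z)
    fun γ' hγ' => (hγ (⟨γ', hγ'⟩ * γ)).trans_eq (by rw [mul_smul]; rfl)
  exact ⟨γ, γ.2, F.mem_domain_iff.2 fun i =>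
    ⟨(hclosed i).1.lt_of_ne' (hz γ i).1, (hclosed i).2.lt_of_ne' (hz γ i).2⟩⟩

theorem disjoint_smul_domain {γ₁ γ₂ : SL(2, ℝ)} (h₁ : γ₁ ∈ F.group) (h₂ : γ₂ ∈ F.group)
    (hne : γ₁ ≠ γ₂) : Disjoint (γ₁ • F.domain) (γ₂ • F.domain) :=
  F.pairwise_disjoint_smul_domain (i := ⟨γ₁, h₁⟩) (j := ⟨γ₂, h₂⟩) (Subtype.coe_ne_coe.1 hne)

theorem volume_compl_biUnion_smul_domain [Countable ι] {p : ℍ} (hp : p.re = 0)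
    (hpF : F.domain ∈ 𝓝 p) : volume (⋃ γ ∈ F.group, γ • F.domain)ᶜ = 0 := by
  rw [measure_eq_zero_iff_ae_notMem]
  filter_upwards [F.ae_exists_smul_mem_domain hp hpF] with z ⟨γ, hγ, hz⟩
  exact not_not.2 (mem_iUnion₂.2 ⟨γ⁻¹, inv_mem hγ, mem_inv_smul_set_iff.2 hz⟩)

end SchottkyFamily

section PartialSums

variable {x : ℕ → ℝ}

theorem sPartial_succ (x : ℕ → ℝ) (n : ℕ) : sPartial x (n + 1) = sPartial x n + x n :=
  Finset.sum_range_succ x n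

theorem sPartial_mono (hx : ∀ n, 0 < x n) : Monotone (sPartial x) :=
  monotone_nat_of_le_succ fun n => by linarith [sPartial_succ x n, hx n]

theorem sPartial_nonneg (hx : ∀ n, 0 < x n) (n : ℕ) : 0 ≤ sPartial x n :=
  Finset.sum_nonneg fun i _ => (hx i).le

/-- The half-circles `γ_n^+` with endpoints `s_{n-1} = sPartial x n` and
`s_n = sPartial x (n + 1)`. -/
noncomputable def partialSumFamily (x : ℕ → ℝ) (hx : ∀ n, 0 < x n) : SchottkyFamily ℕ where
  center n := (sPartial x n + sPartial x (n + 1)) / 2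
  radius n := (sPartial x (n + 1) - sPartial x n) / 2
  radius_pos n := by linarith [sPartial_succ x n, hx n]
  radius_le_center n := by linarith [sPartial_nonneg hx n]
  radius_add_radius_le i j hij := by
    wlog h : i < j generalizing i j
    · rw [add_comm, abs_sub_comm]
      exact this j i hij.symm (lt_of_le_of_ne (not_lt.1 h) hij.symm)
    have hmono : sPartial x (i + 1) ≤ sPartial x j := sPartial_mono hx h
    rw [abs_sub_comm]
    exact le_trans (by linarith) (le_abs_self _)

theorem coe_gen_partialSumFamily (hx : ∀ n, 0 < x n) (n : ℕ) :
    ((partialSumFamily x hx).gen n : Matrix (Fin 2) (Fin 2) ℝ) = gMat x n := by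
  have hx' := (hx n).ne'
  simp only [SchottkyFamily.gen, sidePairing, partialSumFamily, gMat, sPartial_succ,
    add_sub_cancel_left]
  congrm !![?_, ?_; ?_, ?_] <;> field_simp
  ring

theorem group_partialSumFamily (hx : ∀ n, 0 < x n) : (partialSumFamily x hx).group =
    Subgroup.closure {g : SL(2, ℝ) | ∃ n : ℕ, (g : Matrix (Fin 2) (Fin 2) ℝ) = gMat x n} := by
  rw [SchottkyFamily.group]
  congr 1
  ext g
  simp only [mem_range, mem_ofPred_eq, ← coe_gen_partialSumFamily hx, eq_comm (b := g),
    Matrix.SpecialLinearGroup.ext_iff, Matrix.ext_iff]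

theorem coe_image_domain_partialSumFamily (hx : ∀ n, 0 < x n) :
    UpperHalfPlane.coe '' (partialSumFamily x hx).domain =
      {z : ℂ | 0 < z.im ∧ ∀ n : ℕ,
        (sPartial x (n + 1) - sPartial x n) / 2 <
          ‖z - (((sPartial x n + sPartial x (n + 1)) / 2 : ℝ) : ℂ)‖ ∧
        (sPartial x (n + 1) - sPartial x n) / 2 <
          ‖z + (((sPartial x n + sPartial x (n + 1)) / 2 : ℝ) : ℂ)‖} := by
  have hmem (w : ℍ) : w ∈ (partialSumFamily x hx).domain ↔ ∀ n : ℕ,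
        (sPartial x (n + 1) - sPartial x n) / 2 <
          ‖(w : ℂ) - (((sPartial x n + sPartial x (n + 1)) / 2 : ℝ) : ℂ)‖ ∧
        (sPartial x (n + 1) - sPartial x n) / 2 <
          ‖(w : ℂ) + (((sPartial x n + sPartial x (n + 1)) / 2 : ℝ) : ℂ)‖ := by
    simp only [SchottkyFamily.mem_domain_iff, partialSumFamily, dist_eq_norm, Complex.ofReal_neg,
      sub_neg_eq_add]
  ext z
  constructor
  · rintro ⟨w, hw, rfl⟩
    exact ⟨w.im_pos, (hmem w).1 hw⟩
  · rintro ⟨hz, h⟩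
    exact ⟨⟨z, hz⟩, (hmem ⟨z, hz⟩).2 h, rfl⟩

theorem notMem_closedHalfDisc_partialSumFamily (hx : ∀ n, 0 < x n) {z : ℍ} (hre : |z.re| < x 0)
    (him : x 0 / 2 < z.im) {c : ℝ} {n : ℕ} (hc : |c| = (partialSumFamily x hx).center n) :
    z ∉ closedHalfDisc c ((partialSumFamily x hx).radius n) := by
  intro hz
  have hs₁ : sPartial x 1 = x 0 := by simp [sPartial]
  rcases n with _ | n
  · have hz_im := im_le_of_mem_closedHalfDisc hz
    have hs₀ : sPartial x 0 = 0 := by simp [sPartial]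
    simp only [partialSumFamily, zero_add, hs₀, hs₁] at hz_im
    linarith
  · have hz_re := abs_re_sub_lt_of_mem_closedHalfDisc hz
    have htri := abs_sub_abs_le_abs_sub c z.re
    have hmono : sPartial x 1 ≤ sPartial x (n + 1) := sPartial_mono hx (by lia)
    rw [abs_sub_comm] at htri
    simp only [partialSumFamily] at hc hz_re
    linarith

theorem mem_domain_partialSumFamily (hx : ∀ n, 0 < x n) {z : ℍ} (hre : |z.re| < x 0)
    (him : x 0 / 2 < z.im) : z ∈ (partialSumFamily x hx).domain := by
  rw [SchottkyFamily.mem_domain_iff]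
  intro n
  have hc : |(partialSumFamily x hx).center n| = (partialSumFamily x hx).center n :=
    abs_of_pos (SchottkyFamily.center_pos _ n)
  exact ⟨not_le.1 (notMem_closedHalfDisc_partialSumFamily hx hre him hc),
    not_le.1 (notMem_closedHalfDisc_partialSumFamily hx hre him (by rwa [abs_neg]))⟩

theorem exists_domain_partialSumFamily_mem_nhds (hx : ∀ n, 0 < x n) :
    ∃ p : ℍ, p.re = 0 ∧ (partialSumFamily x hx).domain ∈ 𝓝 p := by
  have hx0 := hx 0
  refine ⟨⟨⟨0, x 0⟩, hx0⟩, rfl, ?_⟩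
  have hopen : IsOpen {z : ℍ | |z.re| < x 0 ∧ x 0 / 2 < z.im} :=
    (isOpen_lt continuous_re.abs continuous_const).inter (isOpen_lt continuous_const continuous_im)
  refine mem_of_superset (hopen.mem_nhds ⟨?_, ?_⟩)
    fun z hz => mem_domain_partialSumFamily hx hz.1 hz.2
  · simpa using hx0
  · exact half_lt_self hx0

end PartialSums

section Complex

theorem moebius_coe (γ : SL(2, ℝ)) (z : ℍ) : moebius γ z = ((γ • z : ℍ) : ℂ) :=
  (coe_specialLinearGroup_apply γ z).symm

theorem moebius_image_coe_image (γ : SL(2, ℝ)) (s : Set ℍ) :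
    moebius γ '' (UpperHalfPlane.coe '' s) = UpperHalfPlane.coe '' (γ • s) := by
  simp only [image_image, moebius_coe, ← image_smul]

theorem map_coe_volume : (volume : Measure ℍ).map UpperHalfPlane.coe =
    (volume.restrict {z : ℂ | 0 < z.im}).withDensity
      fun z => ENNReal.ofReal (1 / z.im ^ 2) := by
  ext s hs
  rw [Measure.map_apply measurable_coe hs, volume_eq_lintegral, withDensity_apply _ hs,
    Measure.restrict_restrict hs, image_preimage_eq_inter_range, range_coe]
  refine lintegral_congr fun z => ?_
  rw [← ENNReal.ofReal_coe_nnreal]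
  simp

end Complex

/-- the set `D` (the intersection of the exteriors of the
half-circles `γ_n^±`) is a fundamental domain for the action of `Γ_x` on the
upper half-plane with respect to the hyperbolic area measure `dx·dy/y²`: the
translates `γ·D`, `γ ∈ Γ_x` taken modulo `±I`, are pairwise disjoint, and the
complement in `ℍ` of their union has hyperbolic area zero. -/
theorem stmt10 (x : ℕ → ℝ) (hx : ∀ n, 0 < x n)
    (Γ : Subgroup (Matrix.SpecialLinearGroup (Fin 2) ℝ))
    (hΓ : Γ = Subgroup.closure
      {g : Matrix.SpecialLinearGroup (Fin 2) ℝ |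
        ∃ n : ℕ, (g : Matrix (Fin 2) (Fin 2) ℝ) = gMat x n})
    (D : Set ℂ)
    (hD : D = {z : ℂ | 0 < z.im ∧ ∀ n : ℕ,
      (sPartial x (n + 1) - sPartial x n) / 2 <
        ‖z - (((sPartial x n + sPartial x (n + 1)) / 2 : ℝ) : ℂ)‖ ∧
      (sPartial x (n + 1) - sPartial x n) / 2 <
        ‖z + (((sPartial x n + sPartial x (n + 1)) / 2 : ℝ) : ℂ)‖})
    (μ : MeasureTheory.Measure ℂ)
    (hμ : μ = (MeasureTheory.volume.restrict {z : ℂ | 0 < z.im}).withDensity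
      fun z => ENNReal.ofReal (1 / z.im ^ 2)) :
    (∀ γ₁ γ₂ : Matrix.SpecialLinearGroup (Fin 2) ℝ, γ₁ ∈ Γ → γ₂ ∈ Γ →
      (γ₁ : Matrix (Fin 2) (Fin 2) ℝ) ≠ (γ₂ : Matrix (Fin 2) (Fin 2) ℝ) →
      (γ₁ : Matrix (Fin 2) (Fin 2) ℝ) ≠ -(γ₂ : Matrix (Fin 2) (Fin 2) ℝ) →
      Disjoint (moebius (γ₁ : Matrix (Fin 2) (Fin 2) ℝ) '' D)
        (moebius (γ₂ : Matrix (Fin 2) (Fin 2) ℝ) '' D)) ∧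
    μ ({z : ℂ | 0 < z.im} \
      ⋃ γ ∈ Γ, moebius ((γ : Matrix.SpecialLinearGroup (Fin 2) ℝ) :
        Matrix (Fin 2) (Fin 2) ℝ) '' D) = 0 := by
  obtain ⟨p, hp, hpD⟩ := exists_domain_partialSumFamily_mem_nhds hx
  rw [← group_partialSumFamily hx] at hΓ
  rw [← coe_image_domain_partialSumFamily hx] at hD
  rw [← map_coe_volume] at hμ
  subst hΓ hD hμ
  simp only [moebius_image_coe_image]
  constructor
  · intro γ₁ γ₂ h₁ h₂ hne _
    rw [disjoint_image_iff coe_injective]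
    exact (partialSumFamily x hx).disjoint_smul_domain h₁ h₂ fun h => hne (congrArg _ h)
  · rw [← image_iUnion₂, measurableEmbedding_coe.map_apply, preimage_sdiff,
      preimage_image_eq _ coe_injective]
    exact measure_mono_null (sdiff_subset_compl _ _)
      ((partialSumFamily x hx).volume_compl_biUnion_smul_domain hp hpD)
end

section
/- Let a, b, c, d, e : ℤ → ℝ satisfy a_n < b_n < c_n < d_n < e_n and e_n ≤ a_{n+1} for all n ∈ ℤ. For reals u < v < w < x define T(u,v,w,x) = (1/√(r·r'))·[[O', −(O·O' + r·r')], [1, −O]] ∈ SL(2,ℝ), where O = (u+v)/2, r = (v−u)/2, O' = (w+x)/2, r' = (x−w)/2, and set f_n = T(a_n, b_n, c_n, d_n), g_n = T(b_n, c_n, d_n, e_n), and let G be the subgroup of SL(2,ℝ) generated by {f_n, g_n : n ∈ ℤ}. Then G is a discrete subgroup of SL(2,ℝ): the subspace topology induced on G from SL(2,ℝ) is the discrete topology. -/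
/-- For reals `u < v < w < x`, the matrix
`T(u,v,w,x) = (1/√(r·r'))·[[O', −(O·O' + r·r')], [1, −O]]`, where `O = (u+v)/2`,
`r = (v−u)/2`, `O' = (w+x)/2`, `r' = (x−w)/2`. -/
noncomputable def TMat (u v w x : ℝ) : Matrix (Fin 2) (Fin 2) ℝ :=
  (1 / Real.sqrt (((v - u) / 2) * ((x - w) / 2))) •
    !![(w + x) / 2,
        -(((u + v) / 2) * ((w + x) / 2) + ((v - u) / 2) * ((x - w) / 2));
        1, -((u + v) / 2)]

/-- `SL(2,ℝ)` topologized as a subspace of the 2×2 real matrices. -/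
noncomputable instance : TopologicalSpace (Matrix.SpecialLinearGroup (Fin 2) ℝ) :=
  TopologicalSpace.induced
    (fun g => (g : Matrix (Fin 2) (Fin 2) ℝ)) inferInstance

/-! A Schottky ping-pong argument. The map `T(u,v,w,x)` carries the complement of the half-disc over
`(u, v)` into the half-disc over `(w, x)`, and all half-discs occurring are pairwise disjoint. A
point outside every half-disc is therefore sent into one of them by each nontrivial element of the
group. For a base point that keeps a positive distance from all the half-discs, no nontrivial
element moves it by less than that distance, and continuity of the action gives discreteness. -/

open Function Set Topology UpperHalfPlane
open scoped MatrixGroups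

theorem discreteTopology_of_smul_mem_imp_eq_one_s14 {G X : Type*} [Group G] [TopologicalSpace G]
    [ContinuousMul G] [TopologicalSpace X] [MulAction G X] [ContinuousSMul G X] {x : X}
    {U : Set X} (hU : U ∈ 𝓝 x) (h : ∀ g : G, g • x ∈ U → g = 1) : DiscreteTopology G := by
  have h_cont : ContinuousAt (fun g : G => g • x) 1 := by fun_prop
  have h_nhds : ({1} : Set G) ∈ 𝓝 1 :=
    Filter.mem_of_superset (h_cont.preimage_mem_nhds (by simpa using hU)) h
  exact discreteTopology_of_isOpen_singleton_one (isOpen_iff_mem_nhds.mpr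
    (by rintro _ rfl; exact h_nhds))

section PingPong

-- As for the letters of a free group, `(i, true)` stands for `f i` and `(i, false)` for `(f i)⁻¹`:
-- `D (i, false)` is the source and `D (i, true)` the target of `f i`.
variable {ι G α : Type*} [Group G] [MulAction G α] {f : ι → G} {D : ι × Bool → Set α}

-- The half of the ping-pong hypothesis concerning `(f i)⁻¹` is automatic: if `x ∉ D (i, true)`
-- and `(f i)⁻¹ • x ∉ D (i, false)`, then `x = f i • (f i)⁻¹ • x ∈ D (i, true)`.
theorem letter_smul_mem (hf : ∀ i, ∀ x ∉ D (i, false), f i • x ∈ D (i, true)) (s : ι × Bool)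
    {x : α} (hx : x ∉ D (s.1, !s.2)) : cond s.2 (f s.1) (f s.1)⁻¹ • x ∈ D s := by
  obtain ⟨i, _ | _⟩ := s
  · by_contra h
    exact hx (by simpa using hf i _ h)
  · exact hf i x hx

theorem lift_mk_cons_smul_mem (hD : Pairwise (Disjoint on D))
    (hf : ∀ i, ∀ x ∉ D (i, false), f i • x ∈ D (i, true)) {x : α} (hx : ∀ s, x ∉ D s)
    {s : ι × Bool} {L : List (ι × Bool)} (hL : FreeGroup.IsReduced (s :: L)) :
    FreeGroup.lift f (FreeGroup.mk (s :: L)) • x ∈ D s := by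
  induction L generalizing s with
  | nil => simpa using letter_smul_mem hf s (hx _)
  | cons t L ih =>
    obtain ⟨hst, hL'⟩ := FreeGroup.isReduced_cons_cons.mp hL
    have ht : t ≠ (s.1, !s.2) := by
      rintro rfl
      simp at hst
    have h_tail : FreeGroup.lift f (FreeGroup.mk (t :: L)) • x ∉ D (s.1, !s.2) :=
      disjoint_left.mp (hD ht) (ih hL')
    simpa [mul_smul] using letter_smul_mem hf s h_tail

theorem exists_smul_mem_of_mem_closure_range (hD : Pairwise (Disjoint on D))
    (hf : ∀ i, ∀ x ∉ D (i, false), f i • x ∈ D (i, true)) {x : α} (hx : ∀ s, x ∉ D s)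
    {g : G} (hg : g ∈ Subgroup.closure (range f)) (hg_ne : g ≠ 1) : ∃ s, g • x ∈ D s := by
  classical
  rw [← FreeGroup.range_lift_eq_closure] at hg
  obtain ⟨w, rfl⟩ := hg
  rcases hw : w.toWord with _ | ⟨s, L⟩
  · simp [FreeGroup.toWord_eq_nil_iff.mp hw] at hg_ne
  · refine ⟨s, ?_⟩
    rw [← w.mk_toWord, hw]
    exact lift_mk_cons_smul_mem hD hf hx (hw ▸ FreeGroup.isReduced_toWord)

theorem discreteTopology_closure_range_of_ping_pong [TopologicalSpace G] [IsTopologicalGroup G]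
    [TopologicalSpace α] [ContinuousSMul G α] (hD : Pairwise (Disjoint on D))
    (hf : ∀ i, ∀ x ∉ D (i, false), f i • x ∈ D (i, true)) {x : α} {U : Set α} (hU : U ∈ 𝓝 x)
    (hUD : ∀ s, Disjoint U (D s)) : DiscreteTopology (Subgroup.closure (range f)) := by
  refine discreteTopology_of_smul_mem_imp_eq_one_s14 hU fun g hgU => ?_
  by_contra hg_ne
  have hx : ∀ s, x ∉ D s := fun s => disjoint_left.mp (hUD s) (mem_of_mem_nhds hU)
  obtain ⟨s, hs⟩ := exists_smul_mem_of_mem_closure_range hD hf hx g.2 (by simpa using hg_ne)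
  exact disjoint_left.mp (hUD s) hgU hs

end PingPong

section HalfDisc

/-- The closed half-disc in the upper half-plane bounded by the half-circle with endpoints `u` and
`v`; it is the set on which ping-pong is played. The real endpoints are not in `ℍ`, so half-discs
over adjacent intervals are disjoint. -/
def halfDisc (u v : ℝ) : Set ℍ :=
  {z | ‖(z : ℂ) - ((u + v) / 2 : ℝ)‖ ≤ (v - u) / 2}

theorem re_mem_Ioo_of_mem_halfDisc {u v : ℝ} {z : ℍ} (hz : z ∈ halfDisc u v) :
    z.re ∈ Ioo u v := by
  have h_lt : |z.re - (u + v) / 2| < (v - u) / 2 := by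
    refine lt_of_lt_of_le ?_ hz
    simpa using Complex.abs_re_lt_norm (z := (z : ℂ) - ((u + v) / 2 : ℝ)) |>.mpr
      (by simpa using z.im_ne_zero)
  obtain ⟨h₁, h₂⟩ := abs_lt.mp h_lt
  constructor <;> linarith

theorem disjoint_halfDisc_of_disjoint_Ioo {u v w x : ℝ} (h : Disjoint (Ioo u v) (Ioo w x)) :
    Disjoint (halfDisc u v) (halfDisc w x) :=
  disjoint_left.mpr fun _ hz hz' =>
    disjoint_left.mp h (re_mem_Ioo_of_mem_halfDisc hz) (re_mem_Ioo_of_mem_halfDisc hz')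

theorem half_add_half_le_abs_sub_of_disjoint_Ioo {u v w x : ℝ} (huv : u < v) (hwx : w < x)
    (h : Disjoint (Ioo u v) (Ioo w x)) :
    (v - u) / 2 + (x - w) / 2 ≤ |(u + v) / 2 - (w + x) / 2| := by
  rw [Ioo_disjoint_Ioo, min_le_iff, le_max_iff, le_max_iff] at h
  rw [le_abs]
  rcases h with (h | h) | (h | h)
  all_goals first | (left; linarith) | (right; linarith)

-- The base point lies at height `2 r` above the centre of one half-disc of radius `r`; it is at
-- distance at least `r` from that half-disc and from every other one.
theorem exists_nhds_disjoint_halfDisc {κ : Type*} {lo hi : κ → ℝ} (hlt : ∀ s, lo s < hi s)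
    (hdisj : Pairwise (Disjoint on fun s => Ioo (lo s) (hi s))) :
    ∃ z : ℍ, ∃ U ∈ 𝓝 z, ∀ s, Disjoint U (halfDisc (lo s) (hi s)) := by
  obtain _ | ⟨⟨s₀⟩⟩ := isEmpty_or_nonempty κ
  · exact ⟨I, univ, Filter.univ_mem, isEmptyElim⟩
  set r : κ → ℝ := fun s => (hi s - lo s) / 2
  set O : κ → ℝ := fun s => (lo s + hi s) / 2
  have hr_pos : 0 < r s₀ := half_pos (sub_pos.mpr (hlt s₀))
  let z₀ : ℍ := ⟨⟨O s₀, 2 * r s₀⟩, by positivity⟩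
  have h_far (s : κ) : r s₀ + r s ≤ ‖(z₀ : ℂ) - O s‖ := by
    by_cases hs : s₀ = s
    · subst hs
      have h_im : ((z₀ : ℂ) - O s₀).im = r s₀ + r s₀ := by simp [z₀, two_mul]
      calc r s₀ + r s₀ ≤ |((z₀ : ℂ) - O s₀).im| := h_im.symm.trans_le (le_abs_self _)
        _ ≤ ‖(z₀ : ℂ) - O s₀‖ := Complex.abs_im_le_norm _
    · calc r s₀ + r s ≤ |O s₀ - O s| :=
            half_add_half_le_abs_sub_of_disjoint_Ioo (hlt s₀) (hlt s) (hdisj hs)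
        _ = |((z₀ : ℂ) - O s).re| := by simp [z₀]
        _ ≤ ‖(z₀ : ℂ) - O s‖ := Complex.abs_re_le_norm _
  refine ⟨z₀, (↑) ⁻¹' Metric.ball (z₀ : ℂ) (r s₀),
    continuous_coe.continuousAt.preimage_mem_nhds (Metric.ball_mem_nhds _ hr_pos), fun s => ?_⟩
  refine disjoint_left.mpr fun z hz hzs => ?_
  have h_near : ‖(z₀ : ℂ) - z‖ < r s₀ := by simpa [dist_eq_norm, norm_sub_rev] using hz
  have h_disc : ‖(z : ℂ) - O s‖ ≤ r s := hzs
  linarith [h_far s, norm_sub_le_norm_sub_add_norm_sub (z₀ : ℂ) z (O s)]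

end HalfDisc

-- The topology declared above takes precedence over Mathlib's, to which it is definitionally equal.
instance : IsTopologicalGroup SL(2, ℝ) := Matrix.SpecialLinearGroup.topologicalGroup

instance : ContinuousSMul SL(2, ℝ) ℍ := instContinuousSMulSL2R

section TMat

variable {u v w x : ℝ}

theorem det_TMat (huv : u < v) (hwx : w < x) : (TMat u v w x).det = 1 := by
  have hp : 0 < (v - u) / 2 * ((x - w) / 2) := by
    apply mul_pos <;> linarith
  rw [TMat, Matrix.det_smul, Matrix.det_fin_two_of, Fintype.card_fin, div_pow, one_pow,
    Real.sq_sqrt hp.le, one_div_mul_eq_div, div_eq_one_iff_eq hp.ne']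
  ring

theorem coe_TMat_smul (huv : u < v) (hwx : w < x) {g : SL(2, ℝ)}
    (hg : (g : Matrix (Fin 2) (Fin 2) ℝ) = TMat u v w x) (z : ℍ) :
    ((g • z : ℍ) : ℂ) =
      ((w + x) / 2 : ℝ) - ((v - u) / 2 * ((x - w) / 2) : ℝ) / (z - ((u + v) / 2 : ℝ)) := by
  have hp : 0 < (v - u) / 2 * ((x - w) / 2) := by
    apply mul_pos <;> linarith
  have hk : ((1 / √((v - u) / 2 * ((x - w) / 2)) : ℝ) : ℂ) ≠ 0 :=
    Complex.ofReal_ne_zero.mpr (one_div_ne_zero (Real.sqrt_pos.mpr hp).ne')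
  have hz : (z : ℂ) - ((u + v) / 2 : ℝ) ≠ 0 := sub_ne_zero.mpr (z.ne_ofReal _)
  rw [coe_specialLinearGroup_apply]
  simp only [hg, TMat, Matrix.smul_apply, Matrix.of_apply, Matrix.cons_val',
    Matrix.cons_val_zero, Matrix.cons_val_one, Matrix.cons_val_fin_one, smul_eq_mul,
    Algebra.algebraMap_self, RingHom.id_apply, mul_one]
  generalize 1 / √((v - u) / 2 * ((x - w) / 2)) = k at hk
  have h_den : (k : ℂ) * z + (k * -((u + v) / 2) : ℝ) = k * (z - ((u + v) / 2 : ℝ)) := by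
    push_cast
    ring
  rw [h_den, eq_sub_iff_add_eq, div_add_div _ _ (mul_ne_zero hk hz) hz,
    div_eq_iff (mul_ne_zero (mul_ne_zero hk hz) hz)]
  push_cast
  ring

theorem TMat_smul_mem_halfDisc (huv : u < v) (hwx : w < x) {g : SL(2, ℝ)}
    (hg : (g : Matrix (Fin 2) (Fin 2) ℝ) = TMat u v w x) {z : ℍ} (hz : z ∉ halfDisc u v) :
    g • z ∈ halfDisc w x := by
  have hr : 0 < (v - u) / 2 := by linarith
  have hr' : 0 < (x - w) / 2 := by linarith
  have hz' : (v - u) / 2 < ‖(z : ℂ) - ((u + v) / 2 : ℝ)‖ := not_le.mp hz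
  calc ‖((g • z : ℍ) : ℂ) - ((w + x) / 2 : ℝ)‖
      = (v - u) / 2 * ((x - w) / 2) / ‖(z : ℂ) - ((u + v) / 2 : ℝ)‖ := by
        rw [coe_TMat_smul huv hwx hg, sub_sub_cancel_left, norm_neg, norm_div,
          Complex.norm_of_nonneg (mul_pos hr hr').le]
    _ ≤ (x - w) / 2 := by
        rw [div_le_iff₀ (hr.trans hz'), mul_comm]
        gcongr

end TMat

theorem discreteTopology_closure_range_of_eq_TMat {ι : Type*} {lo hi : ι × Bool → ℝ}
    (hlt : ∀ s, lo s < hi s) (hdisj : Pairwise (Disjoint on fun s => Ioo (lo s) (hi s)))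
    {f : ι → SL(2, ℝ)}
    (hf : ∀ i, (f i : Matrix (Fin 2) (Fin 2) ℝ) =
      TMat (lo (i, false)) (hi (i, false)) (lo (i, true)) (hi (i, true))) :
    DiscreteTopology (Subgroup.closure (range f)) := by
  obtain ⟨z, U, hU, hUD⟩ := exists_nhds_disjoint_halfDisc hlt hdisj
  exact discreteTopology_closure_range_of_ping_pong (D := fun s => halfDisc (lo s) (hi s))
    (hdisj.mono fun _ _ => disjoint_halfDisc_of_disjoint_Ioo)
    (fun i _ => TMat_smul_mem_halfDisc (hlt _) (hlt _) (hf i)) hU hUD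

theorem pairwise_disjoint_Ioo_of_le_succ {α : Type*} [Preorder α] {a e : ℤ → α}
    (hae : ∀ n, a n ≤ e n) (hea : ∀ n, e n ≤ a (n + 1)) :
    Pairwise (Disjoint on fun n => Ioo (a n) (e n)) := by
  have h_mono : Monotone a := monotone_int_of_le_succ fun n => (hae n).trans (hea n)
  exact h_mono.pairwise_disjoint_on_Ioo_succ.mono fun m n hmn =>
    hmn.mono (Ioo_subset_Ioo_right (hea m)) (Ioo_subset_Ioo_right (hea n))

section Quintuples

variable {ι : Type*}

/-- The left endpoint of the interval attached to a letter, where `Sum.inl n` stands for the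
generator `f_n`, `Sum.inr n` for `g_n`, and the Boolean distinguishes the target interval (`true`)
from the source interval (`false`). The right endpoints are `letterEnd b c d e`. -/
def letterEnd (a b c d : ι → ℝ) : (ι ⊕ ι) × Bool → ℝ
  | (.inl n, false) => a n
  | (.inr n, false) => b n
  | (.inl n, true) => c n
  | (.inr n, true) => d n

variable {a b c d e : ι → ℝ}

theorem letterEnd_lt (h : ∀ n, a n < b n ∧ b n < c n ∧ c n < d n ∧ d n < e n) :
    ∀ s, letterEnd a b c d s < letterEnd b c d e s
  | (.inl n, false) => (h n).1
  | (.inr n, false) => (h n).2.1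
  | (.inl n, true) => (h n).2.2.1
  | (.inr n, true) => (h n).2.2.2

theorem Ioo_letterEnd_subset (h : ∀ n, a n < b n ∧ b n < c n ∧ c n < d n ∧ d n < e n)
    (s : (ι ⊕ ι) × Bool) :
    Ioo (letterEnd a b c d s) (letterEnd b c d e s) ⊆
      Ioo (a (s.1.elim id id)) (e (s.1.elim id id)) := by
  obtain ⟨n | n, _ | _⟩ := s <;> obtain ⟨hab, hbc, hcd, hde⟩ := h n <;>
    apply Ioo_subset_Ioo <;> simp only [letterEnd, Sum.elim_inl, Sum.elim_inr, id] <;> linarith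

theorem pairwise_disjoint_Ioo_letterEnd
    (h : ∀ n, a n < b n ∧ b n < c n ∧ c n < d n ∧ d n < e n)
    (hdisj : Pairwise (Disjoint on fun n => Ioo (a n) (e n))) :
    Pairwise (Disjoint on fun s => Ioo (letterEnd a b c d s) (letterEnd b c d e s)) := by
  intro s t hst
  by_cases hn : s.1.elim id id = t.1.elim id id
  · obtain ⟨n | n, _ | _⟩ := s <;> obtain ⟨m | m, _ | _⟩ := t <;>
      obtain rfl : n = m := hn <;> obtain ⟨-, hbc, hcd, -⟩ := h n <;>
      simp only [onFun, letterEnd, Ioo_disjoint_Ioo, min_le_iff, le_max_iff] <;>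
      first | exact absurd rfl hst | grind
  · exact (hdisj hn).mono (Ioo_letterEnd_subset h s) (Ioo_letterEnd_subset h t)

end Quintuples

theorem stmt14_general {ι : Type*} (a b c d e : ι → ℝ)
    (h : ∀ n, a n < b n ∧ b n < c n ∧ c n < d n ∧ d n < e n)
    (hdisj : Pairwise (Disjoint on fun n => Ioo (a n) (e n)))
    (G : Subgroup SL(2, ℝ))
    (hG : G = Subgroup.closure
      {g : SL(2, ℝ) | ∃ n,
        (g : Matrix (Fin 2) (Fin 2) ℝ) = TMat (a n) (b n) (c n) (d n) ∨
        (g : Matrix (Fin 2) (Fin 2) ℝ) = TMat (b n) (c n) (d n) (e n)}) :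
    DiscreteTopology G := by
  let f : ι ⊕ ι → SL(2, ℝ) := Sum.elim
    (fun n => ⟨TMat (a n) (b n) (c n) (d n), det_TMat (h n).1 (h n).2.2.1⟩)
    (fun n => ⟨TMat (b n) (c n) (d n) (e n), det_TMat (h n).2.1 (h n).2.2.2⟩)
  have h_range : {g : SL(2, ℝ) | ∃ n,
      (g : Matrix (Fin 2) (Fin 2) ℝ) = TMat (a n) (b n) (c n) (d n) ∨
      (g : Matrix (Fin 2) (Fin 2) ℝ) = TMat (b n) (c n) (d n) (e n)} = range f := by
    ext g
    constructor
    · rintro ⟨n, hg | hg⟩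
      exacts [⟨.inl n, Subtype.ext hg.symm⟩, ⟨.inr n, Subtype.ext hg.symm⟩]
    · rintro ⟨n | n, rfl⟩
      exacts [⟨n, .inl rfl⟩, ⟨n, .inr rfl⟩]
  rw [hG, h_range]
  exact discreteTopology_closure_range_of_eq_TMat (letterEnd_lt h)
    (pairwise_disjoint_Ioo_letterEnd h hdisj) (by rintro (n | n) <;> rfl)

/-- the subgroup `G` of `SL(2,ℝ)` generated by the elements
`f_n = T(a_n,b_n,c_n,d_n)` and `g_n = T(b_n,c_n,d_n,e_n)`, `n ∈ ℤ`, is discrete: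
the subspace topology induced on `G` from `SL(2,ℝ)` is the discrete topology. -/
theorem stmt14 (a b c d e : ℤ → ℝ)
    (h : ∀ n : ℤ, a n < b n ∧ b n < c n ∧ c n < d n ∧ d n < e n ∧ e n ≤ a (n + 1))
    (G : Subgroup (Matrix.SpecialLinearGroup (Fin 2) ℝ))
    (hG : G = Subgroup.closure
      {g : Matrix.SpecialLinearGroup (Fin 2) ℝ | ∃ n : ℤ,
        (g : Matrix (Fin 2) (Fin 2) ℝ) = TMat (a n) (b n) (c n) (d n) ∨
        (g : Matrix (Fin 2) (Fin 2) ℝ) = TMat (b n) (c n) (d n) (e n)}) :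
    DiscreteTopology ↥G :=
  stmt14_general a b c d e (fun n => ⟨(h n).1, (h n).2.1, (h n).2.2.1, (h n).2.2.2.1⟩)
    (pairwise_disjoint_Ioo_of_le_succ (fun n => by linarith [h n]) fun n => (h n).2.2.2.2) G hG
end
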